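/- Let 0 < s < 1 and let m₁, m₂ ∈ ℕ with m₁ + m₂ ≥ 1. Then there exists a constant C > 0 (depending only on s, m₁, m₂) such that for all ξ, η ∈ ℝ with ξ ≠ 0, η ≠ 0 and |ξ| ≤ |η|/4: |∂_ξ^{m₁} ∂_η^{m₂} (e^{−M(ξ,η)})| ≤ C · (|η|^{2s − m₁ − m₂} + |ξ|^{2s+1−m₁} / |η|^{m₂+1}). -/

import Mathlib

open MeasureTheory Real

/-- `M(ξ,η) = ∫₀¹ |(ξ−η)τ + η|^{2s} dτ`. -/
noncomputable def Mker (s ξ η : ℝ) : ℝ := ∫ τ in (0:ℝ)..1, |(ξ - η) * τ + η| ^ (2 * s)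

/-!
Write `U = |ξ|^{2s}`, `V = |η|^{2s}` and `D = (η - ξ)⁻¹`. Computing the integral gives
`(2s + 1) M = (V η - U ξ) D`, whence `∂_ξ M = (M - U) D` and `∂_η M = (V - M) D`. The monomials in
`U, V, M, ξ⁻¹, η⁻¹, D` times `e^{-M}` are therefore closed under differentiation up to linear
combinations. When `|ξ| ≤ θ |η|` with `θ < 1`, `|D| ≲ |η|⁻¹` and `M ≍ V`, so that `e^{-M}` absorbs
every superfluous power of `V`. Negative powers of `ξ` only arise by differentiating powers of `U`,
and each factor `U` is itself produced by a `ξ`-derivative: the monomials free of `U` give the first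
term of the bound, the others the second.
-/

section AbsRpow

variable {a x : ℝ}

lemma abs_abs_rpow_mul_self (ha : -1 < a) (x : ℝ) : |(|x| ^ a * x)| = |x| ^ (a + 1) := by
  rw [abs_mul, abs_of_nonneg (by positivity : 0 ≤ |x| ^ a),
    rpow_add_one' (abs_nonneg x) (by linarith)]

lemma intervalIntegrable_abs_rpow (ha : -1 < a) (b c : ℝ) :
    IntervalIntegrable (fun t ↦ |t| ^ a) volume b c := by
  refine intervalIntegrable_of_even (fun t ↦ by rw [abs_neg]) fun t ht ↦ ?_
  refine (intervalIntegral.intervalIntegrable_rpow' (a := 0) (b := t) ha).congr fun u hu ↦ ?_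
  rw [Set.uIoc_of_le ht.le] at hu
  simp only [abs_of_pos hu.1]

lemma integral_zero_abs_rpow (ha : -1 < a) (c : ℝ) :
    ∫ t in (0 : ℝ)..c, |t| ^ a = |c| ^ a * c / (a + 1) := by
  have of_nonneg : ∀ b : ℝ, 0 ≤ b → ∫ t in (0 : ℝ)..b, |t| ^ a = |b| ^ a * b / (a + 1) := by
    intro b hb
    have integrand_eq : Set.EqOn (fun t : ℝ ↦ |t| ^ a) (fun t ↦ t ^ a) (Set.uIcc 0 b) := by
      intro t ht
      rw [Set.uIcc_of_le hb] at ht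
      simp only [abs_of_nonneg ht.1]
    rw [intervalIntegral.integral_congr integrand_eq, integral_rpow (Or.inl ha),
      zero_rpow (by linarith), rpow_add_one' hb (by linarith), abs_of_nonneg hb, sub_zero]
  rcases le_total 0 c with hc | hc
  · exact of_nonneg c hc
  · have reflect : ∫ t in (0 : ℝ)..c, |t| ^ a = -∫ t in (0 : ℝ)..-c, |t| ^ a := by
      rw [intervalIntegral.integral_symm, ← neg_zero, ← intervalIntegral.integral_comp_neg]
      simp only [abs_neg, neg_zero]
    rw [reflect, of_nonneg (-c) (by linarith), abs_neg]
    ring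

lemma integral_abs_rpow (ha : -1 < a) (b c : ℝ) :
    ∫ t in b..c, |t| ^ a = (|c| ^ a * c - |b| ^ a * b) / (a + 1) := by
  rw [← intervalIntegral.integral_interval_sub_left (intervalIntegrable_abs_rpow ha 0 c)
    (intervalIntegrable_abs_rpow ha 0 b), integral_zero_abs_rpow ha, integral_zero_abs_rpow ha,
    sub_div]

lemma hasDerivAt_abs_rpow_of_ne_zero (a : ℝ) (hx : x ≠ 0) :
    HasDerivAt (fun t : ℝ ↦ |t| ^ a) (a * x⁻¹ * |x| ^ a) x := by
  refine ((hasDerivAt_abs hx).rpow_const (Or.inl (abs_ne_zero.mpr hx))).congr_deriv ?_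
  rw [rpow_sub_one (abs_ne_zero.mpr hx)]
  rcases hx.lt_or_gt with h | h
  · simp only [sign_neg h, abs_of_neg h, SignType.coe_neg_one]
    field_simp
  · simp only [sign_pos h, abs_of_pos h, SignType.coe_one]
    field_simp

lemma hasDerivAt_abs_rpow_mul_self (a : ℝ) (hx : x ≠ 0) :
    HasDerivAt (fun t : ℝ ↦ |t| ^ a * t) ((a + 1) * |x| ^ a) x := by
  refine ((hasDerivAt_abs_rpow_of_ne_zero a hx).mul (hasDerivAt_id' x)).congr_deriv ?_
  field_simp

lemma rpow_pow_mul_inv_pow (hx : 0 < x) (a : ℝ) (p i : ℕ) :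
    (x ^ a) ^ p * x⁻¹ ^ i = x ^ (a * p - i) := by
  rw [rpow_sub hx, rpow_mul hx.le, rpow_natCast, rpow_natCast, inv_pow, div_eq_mul_inv]

end AbsRpow

section AbsLeMul

variable {θ ξ η : ℝ}

lemma ne_of_abs_le_mul (hθ : θ < 1) (hη : η ≠ 0) (h : |ξ| ≤ θ * |η|) : ξ ≠ η := by
  rintro rfl
  nlinarith [abs_pos.mpr hη]

lemma mul_abs_le_abs_sub (h : |ξ| ≤ θ * |η|) : (1 - θ) * |η| ≤ |η - ξ| := by
  linarith [abs_sub_abs_le_abs_sub η ξ]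

lemma abs_rpow_le_of_abs_le_mul {b : ℝ} (hb : 0 ≤ b) (hθ : 0 ≤ θ) (h : |ξ| ≤ θ * |η|) :
    |ξ| ^ b ≤ θ ^ b * |η| ^ b :=
  (rpow_le_rpow (abs_nonneg ξ) h hb).trans_eq (mul_rpow hθ (abs_nonneg η))

end AbsLeMul

section Calculus

variable {f : ℝ → ℝ} {f' g x : ℝ}

lemma hasDerivAt_pow_of_logDeriv (hf : HasDerivAt f (g * f x) x) (n : ℕ) :
    HasDerivAt (fun t ↦ f t ^ n) (n * g * f x ^ n) x := by
  refine (hf.pow n).congr_deriv ?_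
  rcases n with _ | n
  · simp
  · rw [Nat.add_sub_cancel, pow_succ]
    ring

lemma hasDerivAt_pow_mul_exp_neg (hf : HasDerivAt f f' x) (r : ℕ) :
    HasDerivAt (fun t ↦ f t ^ r * exp (-f t))
      ((r * f x ^ (r - 1) - f x ^ r) * f' * exp (-f x)) x := by
  refine ((hf.pow r).mul hf.neg.exp).congr_deriv ?_
  simp only [Pi.pow_apply, Pi.neg_apply]
  ring

lemma pow_mul_exp_neg_mul_le {κ u : ℝ} (hκ : 0 < κ) (hu : 0 ≤ u) (n : ℕ) :
    u ^ n * exp (-(κ * u)) ≤ n.factorial / κ ^ n := by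
  have h := pow_div_factorial_le_exp (κ * u) (by positivity) n
  rw [div_le_iff₀ (by positivity), mul_pow] at h
  rw [exp_neg, ← div_eq_mul_inv, div_le_div_iff₀ (exp_pos _) (by positivity)]
  linarith

end Calculus

section Kernel

variable {s θ ξ η : ℝ}

lemma Mker_nonneg (s ξ η : ℝ) : 0 ≤ Mker s ξ η :=
  intervalIntegral.integral_nonneg zero_le_one fun _ _ ↦ by positivity

lemma Mker_comm (s ξ η : ℝ) : Mker s ξ η = Mker s η ξ := by
  have reflect := intervalIntegral.integral_comp_sub_left (a := 0) (b := 1)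
    (fun τ ↦ |(ξ - η) * τ + η| ^ (2 * s)) 1
  rw [sub_self, sub_zero] at reflect
  rw [Mker, Mker, ← reflect]
  refine intervalIntegral.integral_congr fun τ _ ↦ ?_
  ring_nf

lemma Mker_eq_div (hs : -1 < 2 * s) (h : ξ ≠ η) :
    Mker s ξ η = (|η| ^ (2 * s) * η - |ξ| ^ (2 * s) * ξ) / ((2 * s + 1) * (η - ξ)) := by
  have hs' : 2 * s + 1 ≠ 0 := by linarith
  have h₁ : ξ - η ≠ 0 := sub_ne_zero.mpr h
  have h₂ : η - ξ ≠ 0 := sub_ne_zero.mpr h.symm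
  rw [Mker, intervalIntegral.integral_comp_mul_add (fun t ↦ |t| ^ (2 * s)) h₁,
    integral_abs_rpow hs, mul_zero, zero_add, mul_one, sub_add_cancel, smul_eq_mul]
  field_simp
  ring

lemma hasDerivAt_Mker_left (hs : -1 < 2 * s) (hξ : ξ ≠ 0) (h : ξ ≠ η) :
    HasDerivAt (fun x ↦ Mker s x η) ((Mker s ξ η - |ξ| ^ (2 * s)) * (η - ξ)⁻¹) ξ := by
  have hs' : 2 * s + 1 ≠ 0 := by linarith
  have hsub : η - ξ ≠ 0 := sub_ne_zero.mpr h.symm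
  have numerator := (hasDerivAt_abs_rpow_mul_self (2 * s) hξ).const_sub (|η| ^ (2 * s) * η)
  have denominator := ((hasDerivAt_id' ξ).const_sub η).const_mul (2 * s + 1)
  have quotient := numerator.div denominator (mul_ne_zero hs' hsub)
  refine (quotient.congr_of_eventuallyEq ?_).congr_deriv ?_
  · filter_upwards [isOpen_ne.mem_nhds h] with x hx using Mker_eq_div hs hx
  · rw [Mker_eq_div hs h]
    field_simp
    ring

lemma Mker_eq_abs_div (hs : -1 < 2 * s) (h : ξ ≠ η) :
    Mker s ξ η = |(|η| ^ (2 * s) * η - |ξ| ^ (2 * s) * ξ)| / ((2 * s + 1) * |η - ξ|) := by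
  rw [← abs_of_nonneg (Mker_nonneg s ξ η), Mker_eq_div hs h, abs_div, abs_mul (2 * s + 1),
    abs_of_pos (by linarith : 0 < 2 * s + 1)]

lemma le_Mker (hs : -1 < 2 * s) (hθ₀ : 0 ≤ θ) (hθ : θ < 1) (hη : η ≠ 0) (h : |ξ| ≤ θ * |η|) :
    (1 - θ ^ (2 * s + 1)) / ((2 * s + 1) * 2) * |η| ^ (2 * s) ≤ Mker s ξ η := by
  have hs' : 0 < 2 * s + 1 := by linarith
  have hη' : 0 < |η| := abs_pos.mpr hη
  have hne := ne_of_abs_le_mul hθ hη h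
  have hsub : 0 < |η - ξ| := abs_pos.mpr (sub_ne_zero.mpr hne.symm)
  have numerator : (1 - θ ^ (2 * s + 1)) * |η| ^ (2 * s + 1) ≤
      |(|η| ^ (2 * s) * η - |ξ| ^ (2 * s) * ξ)| := by
    have := abs_sub_abs_le_abs_sub (|η| ^ (2 * s) * η) (|ξ| ^ (2 * s) * ξ)
    rw [abs_abs_rpow_mul_self hs, abs_abs_rpow_mul_self hs] at this
    linarith [abs_rpow_le_of_abs_le_mul hs'.le hθ₀ h]
  have denominator : |η - ξ| ≤ 2 * |η| := by nlinarith [abs_sub η ξ]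
  calc (1 - θ ^ (2 * s + 1)) / ((2 * s + 1) * 2) * |η| ^ (2 * s)
      = (1 - θ ^ (2 * s + 1)) * |η| ^ (2 * s + 1) / ((2 * s + 1) * (2 * |η|)) := by
        rw [rpow_add_one hη'.ne']
        field_simp
    _ ≤ |(|η| ^ (2 * s) * η - |ξ| ^ (2 * s) * ξ)| / ((2 * s + 1) * |η - ξ|) :=
        div_le_div₀ (abs_nonneg _) numerator (mul_pos hs' hsub)
          (mul_le_mul_of_nonneg_left denominator hs'.le)
    _ = Mker s ξ η := (Mker_eq_abs_div hs hne).symm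

lemma Mker_le (hs : -1 < 2 * s) (hθ : θ < 1) (hη : η ≠ 0) (h : |ξ| ≤ θ * |η|) :
    Mker s ξ η ≤ 2 / ((2 * s + 1) * (1 - θ)) * |η| ^ (2 * s) := by
  have hs' : 0 < 2 * s + 1 := by linarith
  have hη' : 0 < |η| := abs_pos.mpr hη
  have hθ' : 0 < 1 - θ := sub_pos.mpr hθ
  have numerator : |(|η| ^ (2 * s) * η - |ξ| ^ (2 * s) * ξ)| ≤ 2 * |η| ^ (2 * s + 1) := by
    have := abs_sub (|η| ^ (2 * s) * η) (|ξ| ^ (2 * s) * ξ)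
    rw [abs_abs_rpow_mul_self hs, abs_abs_rpow_mul_self hs] at this
    have : |ξ| ^ (2 * s + 1) ≤ |η| ^ (2 * s + 1) :=
      rpow_le_rpow (abs_nonneg ξ) (by nlinarith) hs'.le
    linarith
  calc Mker s ξ η
      = |(|η| ^ (2 * s) * η - |ξ| ^ (2 * s) * ξ)| / ((2 * s + 1) * |η - ξ|) :=
        Mker_eq_abs_div hs (ne_of_abs_le_mul hθ hη h)
    _ ≤ 2 * |η| ^ (2 * s + 1) / ((2 * s + 1) * ((1 - θ) * |η|)) := by
        gcongr
        exact mul_abs_le_abs_sub h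
    _ = 2 / ((2 * s + 1) * (1 - θ)) * |η| ^ (2 * s) := by
        rw [rpow_add_one hη'.ne']
        field_simp

end Kernel

/-- The monomial `U^p V^q M^r ξ^{-i} η^{-j} (η - ξ)^{-l} e^{-M}`, where `U = |ξ|^{2s}` and
`V = |η|^{2s}`. The derivatives of `e^{-M}` are linear combinations of these. -/
noncomputable def derivMonomial (s : ℝ) (p q r i j l : ℕ) (ξ η : ℝ) : ℝ :=
  (|ξ| ^ (2 * s)) ^ p * (|η| ^ (2 * s)) ^ q * ξ⁻¹ ^ i * η⁻¹ ^ j * (η - ξ)⁻¹ ^ l *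
    (Mker s ξ η ^ r * exp (-Mker s ξ η))

section DerivMonomial

variable {s ξ η : ℝ}

lemma derivMonomial_swap (s : ℝ) (p q r i j l : ℕ) (ξ η : ℝ) :
    derivMonomial s p q r i j l ξ η = (-1) ^ l * derivMonomial s q p r j i l η ξ := by
  have hsub : (η - ξ)⁻¹ = -1 * (ξ - η)⁻¹ := by rw [← neg_sub ξ η, inv_neg, neg_one_mul]
  rw [derivMonomial, derivMonomial, Mker_comm s ξ η, hsub, mul_pow]
  ring

lemma hasDerivAt_derivMonomial_left (hs : -1 < 2 * s) (p q r i j l : ℕ) (hξ : ξ ≠ 0)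
    (h : ξ ≠ η) :
    HasDerivAt (fun x ↦ derivMonomial s p q r i j l x η)
      ((2 * s * p - i) * derivMonomial s p q r (i + 1) j l ξ η
        + (l + r) * derivMonomial s p q r i j (l + 1) ξ η
        - r * derivMonomial s (p + 1) q (r - 1) i j (l + 1) ξ η
        - derivMonomial s p q (r + 1) i j (l + 1) ξ η
        + derivMonomial s (p + 1) q r i j (l + 1) ξ η) ξ := by
  have hsub : η - ξ ≠ 0 := sub_ne_zero.mpr h.symm
  have hU := hasDerivAt_pow_of_logDeriv (hasDerivAt_abs_rpow_of_ne_zero (2 * s) hξ) p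
  have hX := hasDerivAt_pow_of_logDeriv (g := -ξ⁻¹)
    ((hasDerivAt_inv hξ).congr_deriv (by ring)) i
  have hD := hasDerivAt_pow_of_logDeriv (f := fun x ↦ (η - x)⁻¹) (g := (η - ξ)⁻¹)
    ((((hasDerivAt_id' ξ).const_sub η).fun_inv hsub).congr_deriv (by field_simp)) l
  have hM := hasDerivAt_pow_mul_exp_neg (hasDerivAt_Mker_left hs hξ h) r
  have hr : (r : ℝ) * Mker s ξ η ^ (r - 1) * Mker s ξ η = r * Mker s ξ η ^ r := by
    rcases r with _ | r
    · simp
    · rw [Nat.add_sub_cancel, pow_succ, mul_assoc]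
  refine ((((hU.mul_const _).mul hX).mul_const _).mul hD |>.mul hM).congr_deriv ?_
  simp only [derivMonomial, Pi.mul_apply]
  linear_combination (|ξ| ^ (2 * s)) ^ p * (|η| ^ (2 * s)) ^ q * ξ⁻¹ ^ i * η⁻¹ ^ j *
    (η - ξ)⁻¹ ^ (l + 1) * exp (-Mker s ξ η) * hr

lemma hasDerivAt_derivMonomial_right (hs : -1 < 2 * s) (p q r i j l : ℕ) (hη : η ≠ 0)
    (h : ξ ≠ η) :
    HasDerivAt (fun y ↦ derivMonomial s p q r i j l ξ y)
      ((2 * s * q - j) * derivMonomial s p q r i (j + 1) l ξ η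
        - (l + r) * derivMonomial s p q r i j (l + 1) ξ η
        + r * derivMonomial s p (q + 1) (r - 1) i j (l + 1) ξ η
        + derivMonomial s p q (r + 1) i j (l + 1) ξ η
        - derivMonomial s p (q + 1) r i j (l + 1) ξ η) η := by
  simp only [derivMonomial_swap s p]
  refine ((hasDerivAt_derivMonomial_left hs q p r j i l hη h.symm).const_mul _).congr_deriv ?_
  ring

end DerivMonomial

/-- The constraints satisfied by the exponents of every monomial `derivMonomial s p q r i j l`
occurring in `∂_ξ^{m₁} ∂_η^{m₂} e^{-M}`. -/
structure IsDerivExponent (m₁ m₂ p q r i j l : ℕ) : Prop where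
  order_eq : i + j + l = m₁ + m₂
  left_le : p + i ≤ m₁
  eq_zero_of_eq_zero : p = 0 → i = 0
  degree_ne_zero : m₁ + m₂ ≠ 0 → p + q + r ≠ 0

/-- The span of the monomials with admissible exponents. Off the axes and the diagonal,
`∂_ξ^{m₁} ∂_η^{m₂} e^{-M}` agrees with one of its elements. -/
def derivSpan (s : ℝ) (m₁ m₂ : ℕ) : Submodule ℝ (ℝ → ℝ → ℝ) :=
  Submodule.span ℝ {F | ∃ p q r i j l, IsDerivExponent m₁ m₂ p q r i j l ∧
    F = derivMonomial s p q r i j l}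

section DerivSpan

variable {s : ℝ} {m₁ m₂ p q r i j l : ℕ} {F : ℝ → ℝ → ℝ}

lemma derivMonomial_mem_derivSpan (s : ℝ) (h : IsDerivExponent m₁ m₂ p q r i j l) :
    derivMonomial s p q r i j l ∈ derivSpan s m₁ m₂ :=
  Submodule.subset_span ⟨p, q, r, i, j, l, h, rfl⟩

lemma smul_derivMonomial_mem_derivSpan {c : ℝ}
    (h : c ≠ 0 → IsDerivExponent m₁ m₂ p q r i j l) :
    c • derivMonomial s p q r i j l ∈ derivSpan s m₁ m₂ := by
  by_cases hc : c = 0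
  · rw [hc, zero_smul]
    exact zero_mem _
  · exact Submodule.smul_mem _ _ (derivMonomial_mem_derivSpan s (h hc))

lemma exists_hasDerivAt_derivMonomial_left (hs : -1 < 2 * s)
    (h : IsDerivExponent m₁ m₂ p q r i j l) :
    ∃ G ∈ derivSpan s (m₁ + 1) m₂, ∀ ξ η : ℝ, ξ ≠ 0 → ξ ≠ η →
      HasDerivAt (fun x ↦ derivMonomial s p q r i j l x η) (G ξ η) ξ := by
  obtain ⟨order_eq, left_le, eq_zero, degree⟩ := h
  refine ⟨_, add_mem (sub_mem (sub_mem (add_mem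
    (smul_derivMonomial_mem_derivSpan (c := 2 * s * p - i) fun hc ↦ ?_)
    (smul_derivMonomial_mem_derivSpan (c := l + r) fun hc ↦ ?_))
    (smul_derivMonomial_mem_derivSpan (c := r) fun _ ↦ ?_))
    (derivMonomial_mem_derivSpan s ?_)) (derivMonomial_mem_derivSpan s ?_),
    fun ξ η hξ hne ↦ hasDerivAt_derivMonomial_left hs p q r i j l hξ hne⟩
  · have : ¬(p = 0 ∧ i = 0) := by
      rintro ⟨rfl, rfl⟩
      simp at hc
    constructor <;> omega
  · have : l + r ≠ 0 := mod_cast hc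
    constructor <;> omega
  all_goals constructor <;> omega

lemma exists_hasDerivAt_derivMonomial_right (hs : -1 < 2 * s)
    (h : IsDerivExponent m₁ m₂ p q r i j l) :
    ∃ G ∈ derivSpan s m₁ (m₂ + 1), ∀ ξ η : ℝ, η ≠ 0 → ξ ≠ η →
      HasDerivAt (fun y ↦ derivMonomial s p q r i j l ξ y) (G ξ η) η := by
  obtain ⟨order_eq, left_le, eq_zero, degree⟩ := h
  refine ⟨_, sub_mem (add_mem (add_mem (sub_mem
    (smul_derivMonomial_mem_derivSpan (c := 2 * s * q - j) fun hc ↦ ?_)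
    (smul_derivMonomial_mem_derivSpan (c := l + r) fun hc ↦ ?_))
    (smul_derivMonomial_mem_derivSpan (c := r) fun _ ↦ ?_))
    (derivMonomial_mem_derivSpan s ?_)) (derivMonomial_mem_derivSpan s ?_),
    fun ξ η hη hne ↦ hasDerivAt_derivMonomial_right hs p q r i j l hη hne⟩
  · have : ¬(q = 0 ∧ j = 0) := by
      rintro ⟨rfl, rfl⟩
      simp at hc
    constructor <;> omega
  · have : l + r ≠ 0 := mod_cast hc
    constructor <;> omega
  all_goals constructor <;> omega

lemma exists_hasDerivAt_left (hs : -1 < 2 * s) (hF : F ∈ derivSpan s m₁ m₂) :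
    ∃ G ∈ derivSpan s (m₁ + 1) m₂, ∀ ξ η : ℝ, ξ ≠ 0 → ξ ≠ η →
      HasDerivAt (fun x ↦ F x η) (G ξ η) ξ := by
  induction hF using Submodule.span_induction with
  | mem F hF =>
    obtain ⟨p, q, r, i, j, l, h, rfl⟩ := hF
    exact exists_hasDerivAt_derivMonomial_left hs h
  | zero => exact ⟨0, zero_mem _, fun ξ η _ _ ↦ hasDerivAt_const ξ 0⟩
  | add F₁ F₂ _ _ ih₁ ih₂ =>
    obtain ⟨G₁, hG₁, d₁⟩ := ih₁
    obtain ⟨G₂, hG₂, d₂⟩ := ih₂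
    exact ⟨G₁ + G₂, add_mem hG₁ hG₂, fun ξ η hξ h ↦ (d₁ ξ η hξ h).add (d₂ ξ η hξ h)⟩
  | smul c F _ ih =>
    obtain ⟨G, hG, d⟩ := ih
    exact ⟨c • G, Submodule.smul_mem _ c hG, fun ξ η hξ h ↦ (d ξ η hξ h).const_mul c⟩

lemma exists_hasDerivAt_right (hs : -1 < 2 * s) (hF : F ∈ derivSpan s m₁ m₂) :
    ∃ G ∈ derivSpan s m₁ (m₂ + 1), ∀ ξ η : ℝ, η ≠ 0 → ξ ≠ η →
      HasDerivAt (fun y ↦ F ξ y) (G ξ η) η := by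
  induction hF using Submodule.span_induction with
  | mem F hF =>
    obtain ⟨p, q, r, i, j, l, h, rfl⟩ := hF
    exact exists_hasDerivAt_derivMonomial_right hs h
  | zero => exact ⟨0, zero_mem _, fun ξ η _ _ ↦ hasDerivAt_const η 0⟩
  | add F₁ F₂ _ _ ih₁ ih₂ =>
    obtain ⟨G₁, hG₁, d₁⟩ := ih₁
    obtain ⟨G₂, hG₂, d₂⟩ := ih₂
    exact ⟨G₁ + G₂, add_mem hG₁ hG₂, fun ξ η hη h ↦ (d₁ ξ η hη h).add (d₂ ξ η hη h)⟩
  | smul c F _ ih =>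
    obtain ⟨G, hG, d⟩ := ih
    exact ⟨c • G, Submodule.smul_mem _ c hG, fun ξ η hη h ↦ (d ξ η hη h).const_mul c⟩

lemma exists_mem_derivSpan_iteratedDeriv_right_eq (hs : -1 < 2 * s) (m₂ : ℕ) :
    ∃ F ∈ derivSpan s 0 m₂, ∀ ξ η : ℝ, η ≠ 0 → ξ ≠ η →
      iteratedDeriv m₂ (fun y ↦ exp (-Mker s ξ y)) η = F ξ η := by
  induction m₂ with
  | zero =>
    have h : IsDerivExponent 0 0 0 0 0 0 0 0 := by constructor <;> simp
    refine ⟨_, derivMonomial_mem_derivSpan s h, fun ξ η _ _ ↦ ?_⟩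
    simp only [iteratedDeriv_zero, derivMonomial, pow_zero, one_mul]
  | succ m ih =>
    obtain ⟨F, hF, deriv_eq⟩ := ih
    obtain ⟨G, hG, d⟩ := exists_hasDerivAt_right hs hF
    refine ⟨G, hG, fun ξ η hη hne ↦ ?_⟩
    rw [iteratedDeriv_succ]
    refine ((d ξ η hη hne).congr_of_eventuallyEq ?_).deriv
    filter_upwards [isOpen_ne.mem_nhds hη, isOpen_ne.mem_nhds hne.symm] with y hy hy'
    exact deriv_eq ξ y hy hy'.symm

lemma exists_mem_derivSpan_iteratedDeriv_eq (hs : -1 < 2 * s) (m₁ m₂ : ℕ) :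
    ∃ F ∈ derivSpan s m₁ m₂, ∀ ξ η : ℝ, ξ ≠ 0 → η ≠ 0 → ξ ≠ η →
      iteratedDeriv m₁ (fun x ↦ iteratedDeriv m₂ (fun y ↦ exp (-Mker s x y)) η) ξ = F ξ η := by
  induction m₁ with
  | zero =>
    obtain ⟨F, hF, deriv_eq⟩ := exists_mem_derivSpan_iteratedDeriv_right_eq hs m₂
    exact ⟨F, hF, fun ξ η _ hη hne ↦ deriv_eq ξ η hη hne⟩
  | succ m ih =>
    obtain ⟨F, hF, deriv_eq⟩ := ih
    obtain ⟨G, hG, d⟩ := exists_hasDerivAt_left hs hF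
    refine ⟨G, hG, fun ξ η hξ hη hne ↦ ?_⟩
    rw [iteratedDeriv_succ]
    refine ((d ξ η hξ hne).congr_of_eventuallyEq ?_).deriv
    filter_upwards [isOpen_ne.mem_nhds hξ, isOpen_ne.mem_nhds hne] with x hx hx'
    exact deriv_eq x η hx hη hx'

end DerivSpan

/-- The weight `|η|^{2s-m₁-m₂} + |ξ|^{2s+1-m₁} / |η|^{m₂+1}` bounding the derivatives of
`e^{-M}`. -/
noncomputable def derivWeight (s : ℝ) (m₁ m₂ : ℕ) (ξ η : ℝ) : ℝ :=
  |η| ^ (2 * s - m₁ - m₂) + |ξ| ^ (2 * s + 1 - m₁) / |η| ^ ((m₂ : ℝ) + 1)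

section Bounds

variable {s θ ξ η : ℝ} {m₁ m₂ p q r i j l n : ℕ} {F : ℝ → ℝ → ℝ}

lemma derivWeight_nonneg (s : ℝ) (m₁ m₂ : ℕ) (ξ η : ℝ) : 0 ≤ derivWeight s m₁ m₂ ξ η := by
  unfold derivWeight
  positivity

lemma rpow_le_mul_derivWeight_of_eq_zero (h : IsDerivExponent m₁ m₂ 0 q r 0 j l)
    (hn : q + r = n + 1) (hη : η ≠ 0) :
    |η| ^ (2 * s * (q + r : ℕ) - (j + l : ℕ)) ≤
      (|η| ^ (2 * s)) ^ n * derivWeight s m₁ m₂ ξ η := by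
  have hη' : 0 < |η| := abs_pos.mpr hη
  have order : ((j + l : ℕ) : ℝ) = m₁ + m₂ := by
    rw [← zero_add j, h.order_eq, Nat.cast_add]
  calc |η| ^ (2 * s * (q + r : ℕ) - (j + l : ℕ))
      = |η| ^ (2 * s * n) * |η| ^ (2 * s - m₁ - m₂) := by
        rw [hn, order, ← rpow_add hη']
        congr 1
        push_cast
        ring
    _ ≤ (|η| ^ (2 * s)) ^ n * derivWeight s m₁ m₂ ξ η := by
        rw [rpow_mul hη'.le, rpow_natCast]
        gcongr
        exact le_add_of_nonneg_right (by positivity)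

lemma rpow_le_mul_derivWeight_of_pos (hs : -1 < 2 * s) (h : IsDerivExponent m₁ m₂ p q r i j l)
    (hp : 1 ≤ p) (hn : p + q + r = n + 1) (hξ : ξ ≠ 0) (hη : η ≠ 0) (hle : |ξ| ≤ |η|) :
    |ξ| ^ (2 * s * p - i) * |η| ^ (2 * s * (q + r : ℕ) - (j + l : ℕ)) ≤
      (|η| ^ (2 * s)) ^ n * derivWeight s m₁ m₂ ξ η := by
  have hξ' : 0 < |ξ| := abs_pos.mpr hξ
  have hη' : 0 < |η| := abs_pos.mpr hη
  have order : (i : ℝ) + j + l = m₁ + m₂ := mod_cast h.order_eq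
  have degree : (p : ℝ) + q + r = n + 1 := mod_cast hn
  have excess_nonneg : 0 ≤ 2 * s * (p - 1) + (m₁ - 1 - i) := by
    have left_le : (p : ℝ) + i ≤ m₁ := mod_cast h.left_le
    have : (1 : ℝ) ≤ p := mod_cast hp
    nlinarith
  calc |ξ| ^ (2 * s * p - i) * |η| ^ (2 * s * (q + r : ℕ) - (j + l : ℕ))
      = |ξ| ^ (2 * s + 1 - m₁) * |ξ| ^ (2 * s * (p - 1) + (m₁ - 1 - i)) *
          |η| ^ (2 * s * (q + r : ℕ) - (j + l : ℕ)) := by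
        rw [← rpow_add hξ']
        congr 2
        ring
    _ ≤ |ξ| ^ (2 * s + 1 - m₁) * |η| ^ (2 * s * (p - 1) + (m₁ - 1 - i)) *
          |η| ^ (2 * s * (q + r : ℕ) - (j + l : ℕ)) := by
        gcongr
    _ = |η| ^ (2 * s * n) * (|ξ| ^ (2 * s + 1 - m₁) / |η| ^ ((m₂ : ℝ) + 1)) := by
        rw [mul_assoc, ← rpow_add hη', div_eq_mul_inv, ← rpow_neg hη'.le, mul_left_comm,
          ← rpow_add hη']
        congr 2
        push_cast
        linear_combination 2 * s * degree - order
    _ ≤ (|η| ^ (2 * s)) ^ n * derivWeight s m₁ m₂ ξ η := by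
        rw [rpow_mul hη'.le, rpow_natCast]
        gcongr
        exact le_add_of_nonneg_left (by positivity)

lemma rpow_le_mul_derivWeight (hs : -1 < 2 * s) (h : IsDerivExponent m₁ m₂ p q r i j l)
    (hn : p + q + r = n + 1) (hξ : ξ ≠ 0) (hη : η ≠ 0) (hle : |ξ| ≤ |η|) :
    |ξ| ^ (2 * s * p - i) * |η| ^ (2 * s * (q + r : ℕ) - (j + l : ℕ)) ≤
      (|η| ^ (2 * s)) ^ n * derivWeight s m₁ m₂ ξ η := by
  rcases Nat.eq_zero_or_pos p with rfl | hp
  · obtain rfl : i = 0 := h.eq_zero_of_eq_zero rfl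
    simpa only [Nat.cast_zero, mul_zero, sub_zero, rpow_zero, one_mul] using
      rpow_le_mul_derivWeight_of_eq_zero h (by omega) hη
  · exact rpow_le_mul_derivWeight_of_pos hs h hp hn hξ hη hle

lemma abs_derivMonomial_le {κ Λ : ℝ} (hθ : θ < 1) (p q r i j l : ℕ) (hξ : ξ ≠ 0) (hη : η ≠ 0)
    (h : |ξ| ≤ θ * |η|) (hκ : κ * |η| ^ (2 * s) ≤ Mker s ξ η)
    (hΛ : Mker s ξ η ≤ Λ * |η| ^ (2 * s)) :
    |derivMonomial s p q r i j l ξ η| ≤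
      Λ ^ r * (1 - θ)⁻¹ ^ l *
        (|ξ| ^ (2 * s * p - i) * |η| ^ (2 * s * (q + r : ℕ) - (j + l : ℕ))) *
        exp (-(κ * |η| ^ (2 * s))) := by
  have hξ' : 0 < |ξ| := abs_pos.mpr hξ
  have hη' : 0 < |η| := abs_pos.mpr hη
  have : 0 < 1 - θ := sub_pos.mpr hθ
  have hM : 0 ≤ Mker s ξ η := Mker_nonneg s ξ η
  have hD : |η - ξ|⁻¹ ≤ ((1 - θ) * |η|)⁻¹ := by
    gcongr
    exact mul_abs_le_abs_sub h
  calc |derivMonomial s p q r i j l ξ η|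
      = (|ξ| ^ (2 * s)) ^ p * (|η| ^ (2 * s)) ^ q * |ξ|⁻¹ ^ i * |η|⁻¹ ^ j * |η - ξ|⁻¹ ^ l *
          (Mker s ξ η ^ r * exp (-Mker s ξ η)) := by
        simp only [derivMonomial, abs_mul, abs_pow, abs_inv, abs_exp, abs_of_nonneg hM,
          abs_of_nonneg (rpow_nonneg hξ'.le _), abs_of_nonneg (rpow_nonneg hη'.le _)]
    _ ≤ (|ξ| ^ (2 * s)) ^ p * (|η| ^ (2 * s)) ^ q * |ξ|⁻¹ ^ i * |η|⁻¹ ^ j *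
          ((1 - θ) * |η|)⁻¹ ^ l *
          ((Λ * |η| ^ (2 * s)) ^ r * exp (-(κ * |η| ^ (2 * s)))) := by
        gcongr
        exact pow_nonneg (hM.trans hΛ) r
    _ = Λ ^ r * (1 - θ)⁻¹ ^ l *
          (|ξ| ^ (2 * s * p - i) * |η| ^ (2 * s * (q + r : ℕ) - (j + l : ℕ))) *
          exp (-(κ * |η| ^ (2 * s))) := by
        rw [← rpow_pow_mul_inv_pow hξ', ← rpow_pow_mul_inv_pow hη', mul_inv]
        ring

lemma exists_abs_derivMonomial_le (hs : -1 < 2 * s) (hθ₀ : 0 ≤ θ) (hθ : θ < 1)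
    (hm : 1 ≤ m₁ + m₂) (h : IsDerivExponent m₁ m₂ p q r i j l) :
    ∃ C, ∀ ξ η : ℝ, ξ ≠ 0 → η ≠ 0 → |ξ| ≤ θ * |η| →
      |derivMonomial s p q r i j l ξ η| ≤ C * derivWeight s m₁ m₂ ξ η := by
  obtain ⟨n, hn⟩ := Nat.exists_eq_succ_of_ne_zero (h.degree_ne_zero (by omega))
  have hs' : 0 < 2 * s + 1 := by linarith
  have : 0 < 1 - θ := sub_pos.mpr hθ
  set κ : ℝ := (1 - θ ^ (2 * s + 1)) / ((2 * s + 1) * 2)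
  set Λ : ℝ := 2 / ((2 * s + 1) * (1 - θ))
  have hκ : 0 < κ := div_pos (sub_pos.mpr (rpow_lt_one hθ₀ hθ hs')) (by positivity)
  refine ⟨Λ ^ r * (1 - θ)⁻¹ ^ l * (n.factorial / κ ^ n), fun ξ η hξ hη hle ↦ ?_⟩
  have hle' : |ξ| ≤ |η| := by nlinarith [abs_nonneg η]
  have hW := derivWeight_nonneg s m₁ m₂ ξ η
  calc |derivMonomial s p q r i j l ξ η|
      ≤ Λ ^ r * (1 - θ)⁻¹ ^ l *
          (|ξ| ^ (2 * s * p - i) * |η| ^ (2 * s * (q + r : ℕ) - (j + l : ℕ))) *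
          exp (-(κ * |η| ^ (2 * s))) :=
        abs_derivMonomial_le hθ p q r i j l hξ hη hle (le_Mker hs hθ₀ hθ hη hle)
          (Mker_le hs hθ hη hle)
    _ ≤ Λ ^ r * (1 - θ)⁻¹ ^ l * ((|η| ^ (2 * s)) ^ n * derivWeight s m₁ m₂ ξ η) *
          exp (-(κ * |η| ^ (2 * s))) := by
        gcongr Λ ^ r * (1 - θ)⁻¹ ^ l * ?_ * exp _
        exact rpow_le_mul_derivWeight hs h hn hξ hη hle'
    _ = Λ ^ r * (1 - θ)⁻¹ ^ l * ((|η| ^ (2 * s)) ^ n * exp (-(κ * |η| ^ (2 * s)))) *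
          derivWeight s m₁ m₂ ξ η := by
        ring
    _ ≤ Λ ^ r * (1 - θ)⁻¹ ^ l * (n.factorial / κ ^ n) * derivWeight s m₁ m₂ ξ η := by
        gcongr
        exact pow_mul_exp_neg_mul_le hκ (by positivity) n

lemma exists_abs_le_of_mem_derivSpan (hs : -1 < 2 * s) (hθ₀ : 0 ≤ θ) (hθ : θ < 1)
    (hm : 1 ≤ m₁ + m₂) (hF : F ∈ derivSpan s m₁ m₂) :
    ∃ C, ∀ ξ η : ℝ, ξ ≠ 0 → η ≠ 0 → |ξ| ≤ θ * |η| →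
      |F ξ η| ≤ C * derivWeight s m₁ m₂ ξ η := by
  induction hF using Submodule.span_induction with
  | mem F hF =>
    obtain ⟨p, q, r, i, j, l, h, rfl⟩ := hF
    exact exists_abs_derivMonomial_le hs hθ₀ hθ hm h
  | zero => exact ⟨0, fun ξ η _ _ _ ↦ by simp⟩
  | add F₁ F₂ _ _ ih₁ ih₂ =>
    obtain ⟨C₁, h₁⟩ := ih₁
    obtain ⟨C₂, h₂⟩ := ih₂
    refine ⟨C₁ + C₂, fun ξ η hξ hη hle ↦ ?_⟩
    rw [add_mul]
    exact (abs_add_le _ _).trans (add_le_add (h₁ ξ η hξ hη hle) (h₂ ξ η hξ hη hle))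
  | smul c F _ ih =>
    obtain ⟨C, h⟩ := ih
    refine ⟨|c| * C, fun ξ η hξ hη hle ↦ ?_⟩
    rw [Pi.smul_apply, Pi.smul_apply, smul_eq_mul, abs_mul, mul_assoc]
    gcongr
    exact h ξ η hξ hη hle

end Bounds

theorem stmt19_general {s θ : ℝ} (hs : -1 < 2 * s) (hθ₀ : 0 ≤ θ) (hθ : θ < 1) {m₁ m₂ : ℕ}
    (hm : 1 ≤ m₁ + m₂) :
    ∃ C > (0:ℝ), ∀ ξ η : ℝ, ξ ≠ 0 → η ≠ 0 → |ξ| ≤ θ * |η| →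
      |iteratedDeriv m₁
          (fun ξ' => iteratedDeriv m₂ (fun η' => Real.exp (-(Mker s ξ' η'))) η) ξ|
        ≤ C * (|η| ^ (2 * s - m₁ - m₂) + |ξ| ^ (2 * s + 1 - m₁) / |η| ^ ((m₂ : ℝ) + 1)) := by
  obtain ⟨F, hF, deriv_eq⟩ := exists_mem_derivSpan_iteratedDeriv_eq hs m₁ m₂
  obtain ⟨C, hC⟩ := exists_abs_le_of_mem_derivSpan hs hθ₀ hθ hm hF
  refine ⟨max C 1, by positivity, fun ξ η hξ hη hle ↦ ?_⟩
  rw [deriv_eq ξ η hξ hη (ne_of_abs_le_mul hθ hη hle)]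
  exact (hC ξ η hξ hη hle).trans
    (mul_le_mul_of_nonneg_right (le_max_left C 1) (derivWeight_nonneg s m₁ m₂ ξ η))

theorem stmt19 (s : ℝ) (hs : 0 < s) (hs1 : s < 1) (m₁ m₂ : ℕ) (hm : 1 ≤ m₁ + m₂) :
    ∃ C > (0:ℝ), ∀ ξ η : ℝ, ξ ≠ 0 → η ≠ 0 → |ξ| ≤ |η| / 4 →
      |iteratedDeriv m₁
          (fun ξ' => iteratedDeriv m₂ (fun η' => Real.exp (-(Mker s ξ' η'))) η) ξ|
        ≤ C * (|η| ^ (2 * s - m₁ - m₂) + |ξ| ^ (2 * s + 1 - m₁) / |η| ^ ((m₂ : ℝ) + 1)) := by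
  simpa only [div_eq_inv_mul] using
    stmt19_general (θ := 4⁻¹) (by linarith) (by norm_num) (by norm_num) hm
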